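/- Let n ≥ 7 be an integer and let A be an n×n 0-1 matrix whose stable index is finite (i.e., some power of A is not a 0-1 matrix). Then θ(A) ≤ g(n). -/

import Mathlib

/-- A matrix over ℕ is a 0-1 matrix iff all its entries are at most 1. -/
def IsZO {α β : Type*} (A : Matrix α β ℕ) : Prop := ∀ i j, A i j ≤ 1

/-- The stable index of a 0-1 matrix: the smallest positive `k` with `A ^ (k+1)`
not a 0-1 matrix, or `⊤` if no such `k` exists. -/
noncomputable def theta {α : Type*} [Fintype α] [DecidableEq α]
    (A : Matrix α α ℕ) : ℕ∞ :=
  sInf ((fun k : ℕ => (k : ℕ∞)) '' {k : ℕ | 1 ≤ k ∧ ¬ IsZO (A ^ (k + 1))})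

/-- `g(n)` from the paper. -/
def g (n : ℕ) : ℕ :=
  if n % 2 = 1 then (n ^ 2 - 1) / 4
  else if n % 4 = 0 then (n ^ 2 - 4) / 4
  else (n ^ 2 - 16) / 4

/-- Basic circulant 0-1 matrix of order `n`. -/
def Cmat (n : ℕ) : Matrix (Fin n) (Fin n) ℕ :=
  Matrix.of fun i j => if (j : ℕ) = ((i : ℕ) + 1) % n then 1 else 0

/-- Condition (★) on `(n, p, q)`. -/
def StarCond (n p q : ℕ) : Prop :=
  p + q = n ∧
  ((n % 2 = 1 ∧ ({p, q} : Finset ℕ) = {(n + 1) / 2, (n - 1) / 2}) ∨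
   (n % 4 = 0 ∧ ({p, q} : Finset ℕ) = {(n + 2) / 2, (n - 2) / 2}) ∨
   (n % 4 = 2 ∧ ({p, q} : Finset ℕ) = {(n + 4) / 2, (n - 4) / 2}))

section Walks

variable {V : Type*} {E : V → V → Prop}

/-- `HasWalk E k x y` says that the digraph `E` has a walk of length `k` from `x` to `y`. -/
def HasWalk (E : V → V → Prop) : ℕ → V → V → Prop
  | 0, x, y => x = y
  | k + 1, x, y => ∃ z, E x z ∧ HasWalk E k z y

/-- `y` can be reached from `x` in the digraph `E`. -/
def Reaches (E : V → V → Prop) (x y : V) : Prop := ∃ k, HasWalk E k x y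

/-- `x` lies on a closed walk of positive length. -/
def OnCycle (E : V → V → Prop) (x : V) : Prop := ∃ y, E x y ∧ Reaches E y x

/-- Two walks of length `k + 1` with the same endpoints and different first steps. -/
def Fork (E : V → V → Prop) (k : ℕ) : Prop :=
  ∃ x y a b, a ≠ b ∧ E x a ∧ E x b ∧ HasWalk E k a y ∧ HasWalk E k b y

open Classical in
/-- A successor of `x` from which `x` can be reached, if there is one. -/
noncomputable def cycleNext (E : V → V → Prop) (x : V) : V :=
  if h : OnCycle E x then h.choose else x

theorem HasWalk.trans {a b : ℕ} {x y z : V} (h₁ : HasWalk E a x y) (h₂ : HasWalk E b y z) :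
    HasWalk E (a + b) x z := by
  induction a generalizing x with
  | zero => cases h₁; simpa using h₂
  | succ a ih =>
    obtain ⟨w, hw, h⟩ := h₁
    rw [Nat.add_right_comm]
    exact ⟨w, hw, ih h⟩

theorem HasWalk.cons {k : ℕ} {x y z : V} (h : E x y) (h' : HasWalk E k y z) :
    HasWalk E (k + 1) x z := ⟨y, h, h'⟩

theorem Reaches.refl (x : V) : Reaches E x x := ⟨0, rfl⟩

theorem Reaches.trans {x y z : V} (h₁ : Reaches E x y) (h₂ : Reaches E y z) : Reaches E x z := by
  obtain ⟨a, ha⟩ := h₁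
  obtain ⟨b, hb⟩ := h₂
  exact ⟨a + b, ha.trans hb⟩

theorem Reaches.of_edge {x y : V} (h : E x y) : Reaches E x y := ⟨1, y, h, rfl⟩

theorem HasWalk.onCycle {k : ℕ} {x : V} (h : HasWalk E k x x) (hk : 0 < k) : OnCycle E x := by
  obtain ⟨k, rfl⟩ := Nat.exists_eq_succ_of_ne_zero hk.ne'
  obtain ⟨y, hy, h⟩ := h
  exact ⟨y, hy, k, h⟩

theorem HasWalk.exists_fun {k : ℕ} {x y : V} (h : HasWalk E k x y) :
    ∃ f : ℕ → V, f 0 = x ∧ f k = y ∧ ∀ i < k, E (f i) (f (i + 1)) := by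
  induction k generalizing x with
  | zero => exact ⟨fun _ => x, rfl, h, by simp⟩
  | succ k ih =>
    obtain ⟨z, hz, h⟩ := h
    obtain ⟨f, h0, hk, hf⟩ := ih h
    refine ⟨fun i => Nat.casesOn i x f, rfl, hk, ?_⟩
    rintro (_ | i) hi
    · simpa [h0] using hz
    · exact hf i (by omega)

theorem hasWalk_segment {L : ℕ} {f : ℕ → V} (hf : ∀ i < L, E (f i) (f (i + 1))) {i j : ℕ}
    (hij : i ≤ j) (hj : j ≤ L) : HasWalk E (j - i) (f i) (f j) := by
  obtain ⟨d, rfl⟩ := Nat.exists_eq_add_of_le hij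
  rw [Nat.add_sub_cancel_left]
  clear hij
  induction d generalizing i with
  | zero => rfl
  | succ d ih =>
    refine ⟨f (i + 1), hf i (by omega), ?_⟩
    have := ih (i := i + 1) (by omega)
    rwa [Nat.add_right_comm] at this

theorem onCycle_of_repeat {L : ℕ} {f : ℕ → V} (hf : ∀ i < L, E (f i) (f (i + 1))) {i j : ℕ}
    (hij : i < j) (hj : j ≤ L) (h : f i = f j) : OnCycle E (f i) := by
  have hw := hasWalk_segment hf hij.le hj
  rw [← h] at hw
  exact hw.onCycle (by omega)

theorem eq_of_not_onCycle {L : ℕ} {f : ℕ → V} (hf : ∀ i < L, E (f i) (f (i + 1))) {i j : ℕ}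
    (hi : i ≤ L) (hj : j ≤ L) (hc : ¬ OnCycle E (f i)) (h : f i = f j) : i = j := by
  rcases lt_trichotomy i j with hij | hij | hij
  · exact absurd (onCycle_of_repeat hf hij hj h) hc
  · exact hij
  · exact absurd (h ▸ onCycle_of_repeat hf hij hi h.symm) hc

theorem exists_repeat [Fintype V] {L : ℕ} (f : ℕ → V) (hL : Fintype.card V ≤ L) :
    ∃ i j, i < j ∧ j ≤ L ∧ f i = f j := by
  obtain ⟨i, hi, j, hj, hij, h⟩ := Finset.exists_ne_map_eq_of_card_lt_of_maps_to
    (s := Finset.range (L + 1)) (t := Finset.univ) (f := f) (by simp; omega) (by simp)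
  simp only [Finset.mem_range] at hi hj
  rcases lt_or_gt_of_ne hij with hlt | hlt
  · exact ⟨i, j, hlt, by omega, h⟩
  · exact ⟨j, i, hlt, by omega, h.symm⟩

theorem Reaches.exists_short [Fintype V] {x y : V} (h : Reaches E x y) :
    ∃ k < Fintype.card V, HasWalk E k x y := by
  classical
  refine ⟨Nat.find h, ?_, Nat.find_spec h⟩
  by_contra! hlt
  obtain ⟨f, h0, hk, hf⟩ := (Nat.find_spec h).exists_fun
  obtain ⟨i, j, hij, hj, hfij⟩ := exists_repeat f hlt
  have h₁ := hasWalk_segment hf (Nat.zero_le i) (hij.le.trans hj)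
  have h₂ := hasWalk_segment hf hj le_rfl
  rw [hfij] at h₁
  have h₃ := h₁.trans h₂
  rw [h0, hk] at h₃
  exact Nat.find_min h (by omega) h₃

theorem cycleNext_spec {x : V} (h : OnCycle E x) :
    E x (cycleNext E x) ∧ Reaches E (cycleNext E x) x := by
  rw [cycleNext, dif_pos h]
  exact h.choose_spec

theorem onCycle_cycleNext {x : V} (h : OnCycle E x) : OnCycle E (cycleNext E x) := by
  obtain ⟨h₁, k, hk⟩ := cycleNext_spec h
  exact (hk.trans (HasWalk.cons h₁ (show HasWalk E 0 _ _ from rfl))).onCycle (by omega)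

theorem hasWalk_iterate {x : V} (h : OnCycle E x) (k : ℕ) :
    HasWalk E k x ((cycleNext E)^[k] x) := by
  induction k generalizing x with
  | zero => rfl
  | succ k ih => exact ⟨_, (cycleNext_spec h).1, ih (onCycle_cycleNext h)⟩

theorem onCycle_iterate {x : V} (h : OnCycle E x) (k : ℕ) :
    OnCycle E ((cycleNext E)^[k] x) := by
  induction k generalizing x with
  | zero => exact h
  | succ k ih => exact ih (onCycle_cycleNext h)

theorem iterate_reaches {x : V} (h : OnCycle E x) (k : ℕ) :
    Reaches E ((cycleNext E)^[k] x) x := by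
  induction k generalizing x with
  | zero => exact Reaches.refl x
  | succ k ih => exact (ih (onCycle_cycleNext h)).trans (cycleNext_spec h).2

/-- A long walk meets a cycle; the vertices before the first and after the last visit to a
cycle are distinct and lie on no cycle. -/
theorem exists_cyclic_range [Fintype V] {L : ℕ} {f : ℕ → V}
    (hf : ∀ i < L, E (f i) (f (i + 1))) (hL : Fintype.card V ≤ L) :
    ∃ s t, s ≤ t ∧ t ≤ L ∧ OnCycle E (f s) ∧ OnCycle E (f t) ∧
      ∃ S : Finset V, (∀ z ∈ S, ¬ OnCycle E z) ∧ S.card = s + (L - t) := by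
  classical
  obtain ⟨i, j, hij, hj, h⟩ := exists_repeat f hL
  have hex : ∃ i, i ≤ L ∧ OnCycle E (f i) :=
    ⟨i, by omega, onCycle_of_repeat hf hij hj h⟩
  obtain ⟨hsL, hs⟩ := Nat.find_spec hex
  have hlast : ∃ d, d ≤ L ∧ OnCycle E (f (L - d)) :=
    ⟨L - Nat.find hex, by omega, by rwa [Nat.sub_sub_self hsL]⟩
  obtain ⟨htL, ht⟩ := Nat.find_spec hlast
  have hs_min : ∀ i < Nat.find hex, ¬ OnCycle E (f i) := fun i hi hc =>
    Nat.find_min hex hi ⟨by omega, hc⟩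
  have ht_max : ∀ i, L - Nat.find hlast < i → i ≤ L → ¬ OnCycle E (f i) := fun i hi hiL hc =>
    Nat.find_min hlast (m := L - i) (by omega) ⟨by omega, by rwa [Nat.sub_sub_self hiL]⟩
  have hst : Nat.find hex ≤ L - Nat.find hlast := Nat.find_min' hex ⟨by omega, ht⟩
  generalize Nat.find hex = s at *
  generalize Nat.find hlast = d at *
  have hnot : ∀ i ∈ Finset.range s ∪ Finset.Ioc (L - d) L, i ≤ L ∧ ¬ OnCycle E (f i) := by
    intro i hi
    rw [Finset.mem_union, Finset.mem_range, Finset.mem_Ioc] at hi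
    rcases hi with hi | hi
    · exact ⟨by omega, hs_min i hi⟩
    · exact ⟨hi.2, ht_max i hi.1 hi.2⟩
  refine ⟨s, L - d, hst, Nat.sub_le _ _, hs, ht,
    (Finset.range s ∪ Finset.Ioc (L - d) L).image f, ?_, ?_⟩
  · intro z hz
    obtain ⟨i, hi, rfl⟩ := Finset.mem_image.1 hz
    exact (hnot i hi).2
  · rw [Finset.card_image_of_injOn, Finset.card_union_of_disjoint]
    · simp
    · rw [Finset.disjoint_left]
      intro i hi hi'
      rw [Finset.mem_range] at hi
      rw [Finset.mem_Ioc] at hi'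
      omega
    · intro i hi j hj hij
      exact eq_of_not_onCycle hf (hnot i hi).1 (hnot j hj).1 (hnot i hi).2 hij

/-- The vertices of the cycle through `x`. -/
noncomputable def cycleVerts [DecidableEq V] (E : V → V → Prop) (x : V) : Finset V :=
  (Finset.range (Function.minimalPeriod (cycleNext E) x)).image fun i => (cycleNext E)^[i] x

theorem card_cycleVerts [DecidableEq V] (x : V) :
    (cycleVerts E x).card = Function.minimalPeriod (cycleNext E) x := by
  rw [cycleVerts, Finset.card_image_of_injOn, Finset.card_range]
  intro i hi j hj h
  exact Function.iterate_injOn_Iio_minimalPeriod (by simpa using hi) (by simpa using hj) h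

theorem iterate_lcm_left (x : V) (q : ℕ) :
    (cycleNext E)^[Nat.lcm (Function.minimalPeriod (cycleNext E) x) q] x = x :=
  Function.isPeriodicPt_iff_minimalPeriod_dvd.2 (Nat.dvd_lcm_left _ _)

theorem iterate_lcm_right (x : V) (p : ℕ) :
    (cycleNext E)^[Nat.lcm p (Function.minimalPeriod (cycleNext E) x)] x = x :=
  Function.isPeriodicPt_iff_minimalPeriod_dvd.2 (Nat.dvd_lcm_right _ _)

end Walks

section NoShortFork

variable {V : Type*} [Fintype V] {E : V → V → Prop} {G : ℕ}

theorem eq_of_edges_on_cycle (hG : ∀ k ≤ G, ¬ Fork E k) (hn : 2 * Fintype.card V ≤ G + 2)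
    {x a b : V} (ha : E x a) (hb : E x b) (hax : Reaches E a x) (hbx : Reaches E b x) : a = b := by
  by_contra hab
  obtain ⟨k, hk, wa⟩ := hax.exists_short
  obtain ⟨l, hl, wb⟩ := hbx.exists_short
  by_cases hkl : k = l
  · subst hkl
    exact hG k (by omega) ⟨x, x, a, b, hab, ha, hb, wa, wb⟩
  · refine hG (k + (l + 1)) (by omega) ⟨x, x, a, b, hab, ha, hb, wa.trans (wb.cons hb), ?_⟩
    rw [show k + (l + 1) = l + (k + 1) by omega]
    exact wb.trans (wa.cons ha)

theorem eq_iterate_of_hasWalk (hG : ∀ k ≤ G, ¬ Fork E k) (hn : 2 * Fintype.card V ≤ G + 2)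
    {k : ℕ} {x y : V} (h : HasWalk E k x y) (hyx : Reaches E y x) :
    y = (cycleNext E)^[k] x := by
  induction k generalizing x with
  | zero => exact h.symm
  | succ k ih =>
    obtain ⟨z, hz, h⟩ := h
    have hzx : Reaches E z x := Reaches.trans ⟨k, h⟩ hyx
    have hx := cycleNext_spec (x := x) ⟨z, hz, hzx⟩
    obtain rfl := eq_of_edges_on_cycle hG hn hz hx.1 hzx hx.2
    exact ih h (hyx.trans (Reaches.of_edge hz))

theorem mem_periodicPts_cycleNext (hG : ∀ k ≤ G, ¬ Fork E k)
    (hn : 2 * Fintype.card V ≤ G + 2) {x : V} (hx : OnCycle E x) :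
    x ∈ Function.periodicPts (cycleNext E) := by
  obtain ⟨y, hy, k, hk⟩ := hx
  exact ⟨k + 1, by omega, (eq_iterate_of_hasWalk hG hn (hk.cons hy) (Reaches.refl x)).symm⟩

theorem card_add_minimalPeriod_le {x : V} (hx : OnCycle E x) {S : Finset V}
    (hS : ∀ z ∈ S, ¬ OnCycle E z) :
    S.card + Function.minimalPeriod (cycleNext E) x ≤ Fintype.card V := by
  classical
  rw [← card_cycleVerts, ← Finset.card_union_of_disjoint]
  · exact Finset.card_le_univ _
  · rw [Finset.disjoint_left]
    intro z hz hz'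
    obtain ⟨i, -, rfl⟩ := Finset.mem_image.1 hz'
    exact hS _ hz (onCycle_iterate hx i)

theorem card_add_minimalPeriod_add_le {x y : V} (hx : OnCycle E x) (hy : OnCycle E y)
    (hxy : ¬ (Reaches E x y ∧ Reaches E y x)) {S : Finset V} (hS : ∀ z ∈ S, ¬ OnCycle E z) :
    S.card + Function.minimalPeriod (cycleNext E) x + Function.minimalPeriod (cycleNext E) y ≤
      Fintype.card V := by
  classical
  rw [← card_cycleVerts x, ← card_cycleVerts y, ← Finset.card_union_of_disjoint,
    ← Finset.card_union_of_disjoint]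
  · exact Finset.card_le_univ _
  · rw [Finset.disjoint_left]
    intro z hz hz'
    obtain ⟨j, -, rfl⟩ := Finset.mem_image.1 hz'
    rcases Finset.mem_union.1 hz with hz | hz
    · exact hS _ hz (onCycle_iterate hy j)
    · obtain ⟨i, -, hi⟩ := Finset.mem_image.1 hz
      refine hxy ⟨Reaches.trans ⟨i, hasWalk_iterate hx i⟩ ?_,
        Reaches.trans ⟨j, hasWalk_iterate hy j⟩ ?_⟩
      · exact hi ▸ iterate_reaches hy j
      · rw [← hi]
        exact iterate_reaches hx i
  · rw [Finset.disjoint_left]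
    intro z hz hz'
    obtain ⟨i, -, rfl⟩ := Finset.mem_image.1 hz'
    exact hS _ hz (onCycle_iterate hx i)

/-- Without short forks, no cycle leads to a different cycle. -/
theorem reaches_symm_of_onCycle (hG : ∀ k ≤ G, ¬ Fork E k) (hn : 2 * Fintype.card V ≤ G + 2)
    (hlcm : ∀ p q, 0 < p → 0 < q → p + q ≤ Fintype.card V →
      Nat.lcm p q + Fintype.card V ≤ G + p + q)
    {x y : V} (hx : OnCycle E x) (hy : OnCycle E y) (hxy : Reaches E x y) : Reaches E y x := by
  classical
  obtain ⟨d, hd⟩ := hxy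
  induction d using Nat.strong_induction_on generalizing x y with
  | _ d ih =>
  by_contra hyx
  obtain ⟨f, rfl, rfl, hf⟩ := hd.exists_fun
  have hd0 : 0 < d := by
    rcases Nat.eq_zero_or_pos d with rfl | h
    · exact absurd (Reaches.refl _) hyx
    · exact h
  have hint : ∀ i, 0 < i → i < d → ¬ OnCycle E (f i) := by
    intro i hi hid hc
    have h₁ := ih i hid hx hc (by simpa using hasWalk_segment hf (Nat.zero_le i) hid.le)
    have h₂ := ih (d - i) (by omega) hc hy (hasWalk_segment hf hid.le le_rfl)
    exact hyx (h₂.trans h₁)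
  have hcard := card_add_minimalPeriod_add_le hx hy (fun h => hyx h.2)
    (S := (Finset.Ioo 0 d).image f) (by
      intro z hz
      obtain ⟨i, hi, rfl⟩ := Finset.mem_image.1 hz
      rw [Finset.mem_Ioo] at hi
      exact hint i hi.1 hi.2)
  rw [Finset.card_image_of_injOn, Nat.card_Ioo] at hcard
  swap
  · intro i hi j hj hij
    simp only [Finset.coe_Ioo, Set.mem_Ioo] at hi hj
    exact eq_of_not_onCycle hf hi.2.le hj.2.le (hint i hi.1 hi.2) hij
  have hp := Function.minimalPeriod_pos_of_mem_periodicPts (mem_periodicPts_cycleNext hG hn hx)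
  have hq := Function.minimalPeriod_pos_of_mem_periodicPts (mem_periodicPts_cycleNext hG hn hy)
  have hm := iterate_lcm_left (E := E) (f 0) (Function.minimalPeriod (cycleNext E) (f d))
  have hm' := iterate_lcm_right (E := E) (f d) (Function.minimalPeriod (cycleNext E) (f 0))
  have hm0 := Nat.lcm_pos hp hq
  have hle := hlcm _ _ hp hq (by omega)
  generalize Nat.lcm _ _ = m at *
  have hw := hasWalk_segment hf (i := 1) (j := d) hd0 le_rfl
  obtain ⟨e₁, r₁⟩ := cycleNext_spec hx
  refine hG (m - 1 + d) (by omega)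
    ⟨f 0, f d, cycleNext E (f 0), f 1, ?_, e₁, hf 0 hd0, ?_, ?_⟩
  · intro h
    have := ih (d - 1) (by omega) (onCycle_cycleNext hx) hy (h ▸ hw)
    exact hyx (this.trans r₁)
  · refine HasWalk.trans ?_ hd
    have := hasWalk_iterate (onCycle_cycleNext hx) (m - 1)
    rwa [← Function.iterate_succ_apply, Nat.succ_eq_add_one, Nat.sub_add_cancel hm0, hm] at this
  · have := hw.trans (hasWalk_iterate hy m)
    rwa [hm', show d - 1 + m = m - 1 + d by omega] at this

/-- A walk of length `L` meeting a single cycle for at least `m` steps, where `m` is a period of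
that cycle, can be shortened by `m`. -/
theorem hasWalk_sub_period (hG : ∀ k ≤ G, ¬ Fork E k) (hn : 2 * Fintype.card V ≤ G + 2)
    {L s t m : ℕ} {f : ℕ → V} (hf : ∀ i < L, E (f i) (f (i + 1))) (hst : s ≤ t) (htL : t ≤ L)
    (hs : OnCycle E (f s)) (hts : Reaches E (f t) (f s)) (hm : (cycleNext E)^[m] (f s) = f s)
    (hmst : m ≤ t - s) : HasWalk E (L - m) (f 0) (f L) := by
  have h₁ := hasWalk_segment hf (Nat.zero_le s) (hst.trans htL)
  have h₂ := hasWalk_iterate hs (t - s - m)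
  have h₃ := hasWalk_segment hf htL le_rfl
  have ht := eq_iterate_of_hasWalk hG hn (hasWalk_segment hf hst htL) hts
  rw [show t - s = t - s - m + m by omega, Function.iterate_add_apply, hm] at ht
  rw [← ht] at h₂
  have := (h₁.trans h₂).trans h₃
  rwa [show s - 0 + (t - s - m) + (L - t) = L - m by omega] at this

/-- If there are no forks of index at most `G`, there are no forks at all. -/
theorem not_fork (hG : ∀ k ≤ G, ¬ Fork E k) (hn : 2 * Fintype.card V ≤ G + 2)
    (hcard : Fintype.card V ≤ G)
    (hlcm : ∀ p q, 0 < p → 0 < q → p + q ≤ Fintype.card V →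
      Nat.lcm p q + Fintype.card V ≤ G + p + q) (k : ℕ) : ¬ Fork E k := by
  induction k using Nat.strong_induction_on with
  | _ k ih =>
  intro hk
  by_cases hkG : k ≤ G
  · exact hG k hkG hk
  obtain ⟨u, v, a, b, hab, hua, hub, wa, wb⟩ := hk
  obtain ⟨f, rfl, fk, hf⟩ := wa.exists_fun
  obtain ⟨h, rfl, hk, hh⟩ := wb.exists_fun
  obtain ⟨s, t, hst, htk, hs, ht, S, hS, hSc⟩ := exists_cyclic_range hf (by omega)
  obtain ⟨s', t', hst', htk', hs', ht', S', hS', hSc'⟩ := exists_cyclic_range hh (by omega)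
  have hp := Function.minimalPeriod_pos_of_mem_periodicPts (mem_periodicPts_cycleNext hG hn hs)
  have hq := Function.minimalPeriod_pos_of_mem_periodicPts (mem_periodicPts_cycleNext hG hn hs')
  have hpn := card_add_minimalPeriod_le hs hS
  have hqn := card_add_minimalPeriod_le hs' hS'
  have hm := iterate_lcm_left (E := E) (f s) (Function.minimalPeriod (cycleNext E) (h s'))
  have hm' := iterate_lcm_right (E := E) (h s') (Function.minimalPeriod (cycleNext E) (f s))
  have hm0 := Nat.lcm_pos hp hq
  have hbound : Nat.lcm (Function.minimalPeriod (cycleNext E) (f s))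
      (Function.minimalPeriod (cycleNext E) (h s')) ≤ t - s ∧
      Nat.lcm (Function.minimalPeriod (cycleNext E) (f s))
      (Function.minimalPeriod (cycleNext E) (h s')) ≤ t' - s' := by
    by_cases hr : Reaches E (f s) (h s') ∧ Reaches E (h s') (f s)
    · obtain ⟨⟨j, hj⟩, hr⟩ := hr
      have heq : Function.minimalPeriod (cycleNext E) (h s') =
          Function.minimalPeriod (cycleNext E) (f s) := by
        rw [eq_iterate_of_hasWalk hG hn hj hr]
        exact Function.minimalPeriod_apply_iterate (mem_periodicPts_cycleNext hG hn hs) j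
      rw [heq] at hqn ⊢
      rw [Nat.lcm_self]
      omega
    · have h₁ := card_add_minimalPeriod_add_le hs hs' hr hS
      have h₂ := card_add_minimalPeriod_add_le hs hs' hr hS'
      have h₃ := hlcm _ _ hp hq (by omega)
      omega
  generalize Nat.lcm _ _ = m at *
  have hts := reaches_symm_of_onCycle hG hn hlcm hs ht ⟨_, hasWalk_segment hf hst htk⟩
  have hts' := reaches_symm_of_onCycle hG hn hlcm hs' ht' ⟨_, hasWalk_segment hh hst' htk'⟩
  refine ih (k - m) (by omega) ⟨u, v, f 0, h 0, hab, hua, hub, ?_, ?_⟩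
  · exact fk ▸ hasWalk_sub_period hG hn hf hst htk hs hts hm hbound.1
  · exact hk ▸ hasWalk_sub_period hG hn hh hst' htk' hs' hts' hm' hbound.2

end NoShortFork

section Powers

variable {V : Type*} [Fintype V] [DecidableEq V] {A : Matrix V V ℕ}

theorem pow_pos_iff_hasWalk (k : ℕ) (x y : V) :
    0 < (A ^ k) x y ↔ HasWalk (fun i j => 0 < A i j) k x y := by
  induction k generalizing x with
  | zero => simp [HasWalk, Matrix.one_apply, Nat.pos_iff_ne_zero]
  | succ k ih =>
    rw [pow_succ', Matrix.mul_apply, Finset.sum_pos_iff]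
    simp [HasWalk, ← ih]

theorem not_isZO_of_fork {k : ℕ} (h : Fork (fun i j => 0 < A i j) k) : ¬ IsZO (A ^ (k + 1)) := by
  obtain ⟨x, y, a, b, hab, ha, hb, wa, wb⟩ := h
  rw [← pow_pos_iff_hasWalk] at wa wb
  intro hZ
  have hle := hZ x y
  rw [pow_succ', Matrix.mul_apply] at hle
  have hsub := Finset.sum_le_sum_of_subset (f := fun j => A x j * (A ^ k) j y)
    (Finset.subset_univ {a, b})
  rw [Finset.sum_pair hab] at hsub
  have := Nat.mul_pos ha wa
  have := Nat.mul_pos hb wb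
  omega

theorem isZO_pow_of_not_fork (hA : IsZO A) (h : ∀ k, ¬ Fork (fun i j => 0 < A i j) k) (k : ℕ) :
    IsZO (A ^ k) := by
  induction k with
  | zero =>
    intro x y
    rw [pow_zero, Matrix.one_apply]
    split <;> simp
  | succ k ih =>
    intro x y
    by_contra! hlt
    rw [pow_succ', Matrix.mul_apply] at hlt
    have hterm : ∀ j, A x j * (A ^ k) j y ≤ 1 := fun j =>
      Nat.mul_le_mul (hA x j) (ih j y)
    obtain ⟨a, -, ha⟩ := Finset.exists_ne_zero_of_sum_ne_zero (Nat.ne_of_gt (pos_of_gt hlt))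
    rw [← Finset.add_sum_erase _ _ (Finset.mem_univ a)] at hlt
    have hrest : ∑ j ∈ Finset.univ.erase a, A x j * (A ^ k) j y ≠ 0 := by
      have := hterm a
      omega
    obtain ⟨b, hb, hb0⟩ := Finset.exists_ne_zero_of_sum_ne_zero hrest
    rw [mul_ne_zero_iff, ← Nat.pos_iff_ne_zero, ← Nat.pos_iff_ne_zero, pow_pos_iff_hasWalk]
      at ha hb0
    exact h k ⟨x, y, a, b, (Finset.ne_of_mem_erase hb).symm, ha.1, hb0.1, ha.2, hb0.2⟩

end Powers

theorem four_mul_g (n : ℕ) (hn : 7 ≤ n) :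
    (n % 2 = 1 ∧ 4 * g n + 1 = n ^ 2) ∨ (n % 4 = 0 ∧ 4 * g n + 4 = n ^ 2) ∨
      (n % 4 = 2 ∧ 10 ≤ n ∧ 4 * g n + 16 = n ^ 2) := by
  have hsq : 7 * 7 ≤ n ^ 2 := by nlinarith
  rcases Nat.even_or_odd' n with ⟨c, rfl | rfl⟩
  · have : (2 * c) ^ 2 = 4 * c ^ 2 := by ring
    unfold g
    split_ifs <;> omega
  · have : (2 * c + 1) ^ 2 = 4 * (c ^ 2 + c) + 1 := by ring
    unfold g
    split_ifs <;> omega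

theorem two_mul_le_g_add_two (n : ℕ) (hn : 7 ≤ n) : 2 * n ≤ g n + 2 := by
  rcases four_mul_g n hn with ⟨h, hg⟩ | ⟨h, hg⟩ | ⟨h, h', hg⟩
  · nlinarith
  · have : 8 ≤ n := by omega
    nlinarith
  · nlinarith

theorem lcm_add_le_g (n : ℕ) (hn : 7 ≤ n) (p q : ℕ) (hp : 0 < p) (hq : 0 < q) (hpq : p + q ≤ n) :
    Nat.lcm p q + n ≤ g n + p + q := by
  wlog hle : p ≤ q generalizing p q with H
  · have := H q p hq hp (by omega) (by omega)
    rw [Nat.lcm_comm] at this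
    omega
  have hmul : Nat.gcd p q * Nat.lcm p q = p * q := Nat.gcd_mul_lcm p q
  have hlcm : Nat.lcm p q ≤ p * q := Nat.le_of_dvd (by positivity) (Nat.lcm_dvd_mul p q)
  obtain ⟨e, rfl⟩ := Nat.exists_eq_add_of_le hle
  obtain ⟨j, hj⟩ := Nat.exists_eq_add_of_le hpq
  have hpe : 4 * (p * (p + e)) + e ^ 2 = (p + (p + e)) ^ 2 := by ring
  have hn2 : n ^ 2 = (p + (p + e)) ^ 2 + 2 * j * (p + (p + e)) + j ^ 2 := by rw [hj]; ring
  have hodd : n % 2 = 1 ∨ n ^ 2 % 4 = 0 := by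
    rcases Nat.even_or_odd' n with ⟨c, rfl | rfl⟩
    · right
      rw [mul_pow]
      omega
    · left
      omega
  rcases Nat.eq_zero_or_pos j with rfl | hj0
  · rcases four_mul_g n hn with ⟨h, hg⟩ | ⟨h, hg⟩ | ⟨h, h', hg⟩
    · omega
    · have he : e ≠ 0 → 4 ≤ e ^ 2 := fun h0 => by
        have : 2 ≤ e := by omega
        nlinarith
      rcases Nat.eq_zero_or_pos e with rfl | he0
      · rw [add_zero, Nat.lcm_self]
        nlinarith
      · have := he he0.ne'
        omega
    · obtain ⟨c, rfl⟩ : ∃ c, e = 2 * c := ⟨e / 2, by omega⟩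
      have hc : (2 * c) ^ 2 = 4 * c ^ 2 := by ring
      rcases Nat.lt_or_ge c 2 with hc2 | hc2
      · interval_cases c
        · rw [mul_zero, add_zero, Nat.lcm_self]
          nlinarith
        · have hgcd : 2 ≤ Nat.gcd p (p + 2 * 1) :=
            Nat.le_of_dvd (Nat.gcd_pos_of_pos_left _ hp) (Nat.dvd_gcd (by omega) (by omega))
          have h2 := Nat.mul_le_mul_right (Nat.lcm p (p + 2 * 1)) hgcd
          have : 10 * 10 ≤ n ^ 2 := by nlinarith
          omega
      · have : 4 ≤ c ^ 2 := by nlinarith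
        omega
  · have hjn : 2 * n + 4 * j ≤ 2 * j * (p + (p + e)) + j ^ 2 + 5 := by
      obtain ⟨i, rfl⟩ := Nat.exists_eq_add_of_le' hj0
      nlinarith [Nat.zero_le (i * p), Nat.zero_le (i * e), Nat.mul_le_mul_left i hp]
    rcases four_mul_g n hn with ⟨h, hg⟩ | ⟨h, hg⟩ | ⟨h, h', hg⟩ <;> omega

/-- For `n ≥ 7` and an `n × n` 0-1 matrix `A` with finite stable
index, `θ(A) ≤ g(n)`. -/
theorem stmt_0 (n : ℕ) (hn : 7 ≤ n) (A : Matrix (Fin n) (Fin n) ℕ)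
    (hA : IsZO A) (hfin : theta A ≠ ⊤) :
    theta A ≤ (g n : ℕ∞) := by
  have hfork : ∃ k ≤ g n, Fork (fun i j => 0 < A i j) k := by
    by_contra! hno
    refine hfin ?_
    have hg := two_mul_le_g_add_two n hn
    have hZ := isZO_pow_of_not_fork hA
      (not_fork hno (by simpa using hg) (by simp; omega) (by simpa using lcm_add_le_g n hn))
    simp [theta, hZ]
  obtain ⟨k, hk, hf⟩ := hfork
  have hk0 : 1 ≤ k := by
    rcases Nat.eq_zero_or_pos k with rfl | h
    · obtain ⟨x, y, a, b, hab, -, -, h₁, h₂⟩ := hf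
      exact absurd (Eq.trans h₁ (Eq.symm h₂)) hab
    · exact h
  have hle : theta A ≤ (k : ℕ∞) := sInf_le ⟨k, ⟨hk0, not_isZO_of_fork hf⟩, rfl⟩
  exact hle.trans (by exact_mod_cast hk)
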